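/- (Composition) The set of N-valid formulas is closed under modus ponens: for all propositional formulas φ and ψ, if φ is N-valid and φ → ψ is N-valid, then ψ is N-valid. -/

import Mathlib

/-! ## Dialogical logic: formulas, statements, moves -/

/-- Propositional formulas, built from atoms (indexed by `ℕ`) and `¬`, `∧`, `∨`, `→`. -/
inductive Formula : Type
  | atom : ℕ → Formula
  | neg : Formula → Formula
  | conj : Formula → Formula → Formula
  | disj : Formula → Formula → Formula
  | impl : Formula → Formula → Formula
  deriving DecidableEq, Inhabited

/-- Statements: formulas together with the three symbolic attacks `∧_L`, `∧_R` and `?`. -/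
inductive Statement : Type
  | form : Formula → Statement
  | conjL : Statement  -- the symbolic attack ∧_L
  | conjR : Statement  -- the symbolic attack ∧_R
  | question : Statement   -- the symbolic attack ?
  deriving DecidableEq, Inhabited

/-- A formula is atomic iff it is an atom. -/
def Formula.isAtomic : Formula → Prop
  | .atom _ => True
  | _ => False

/-- A move of a dialogue: a statement together with a reference.  The reference is
`none` for the initial move, `some (m, true)` for an attack on the assertion made at
move `m`, and `some (m, false)` for a defense against the attack made at move `m`. -/
structure Move : Type where
  stmt : Statement
  ref : Option (ℕ × Bool)
  deriving DecidableEq, Inhabited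

/-! ## Particle rules -/

/-- Particle rules, attacks: `Attacks a φ` holds when the statement `a` is an
admissible attack against the assertion `φ`. -/
inductive Attacks : Statement → Formula → Prop
  | conjL (φ ψ : Formula) : Attacks .conjL (.conj φ ψ)
  | conjR (φ ψ : Formula) : Attacks .conjR (.conj φ ψ)
  | disj (φ ψ : Formula) : Attacks .question (.disj φ ψ)
  | impl (φ ψ : Formula) : Attacks (.form φ) (.impl φ ψ)
  | neg (φ : Formula) : Attacks (.form φ) (.neg φ)

/-- Particle rules, defenses: `Defends s a φ` holds when the statement `s` is an
admissible defense of the assertion `φ` against the attack `a`.  (A negation admits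
no defense.) -/
inductive Defends : Statement → Statement → Formula → Prop
  | conjL (φ ψ : Formula) : Defends (.form φ) .conjL (.conj φ ψ)
  | conjR (φ ψ : Formula) : Defends (.form ψ) .conjR (.conj φ ψ)
  | disjL (φ ψ : Formula) : Defends (.form φ) .question (.disj φ ψ)
  | disjR (φ ψ : Formula) : Defends (.form ψ) .question (.disj φ ψ)
  | impl (φ ψ : Formula) : Defends (.form ψ) (.form φ) (.impl φ ψ)

/-! ## Dialogues

A (finite stage of a) dialogue is modelled as a list of moves; the move at index `i`
is the `i`-th move, made by Proponent P if `i` is even and by Opponent O if `i` is odd. -/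

/-- The skeletal dialogue conditions: move 0 is an assertion of a formula with no
reference, and every later move is an attack on, or a defense against, a specified
earlier move of the other player, in accordance with the particle rules; only
non-atomic assertions may be attacked. -/
def IsDialogue (d : List Move) : Prop :=
  (∀ _ : 0 < d.length, d[0]!.ref = none ∧ ∃ φ : Formula, d[0]!.stmt = .form φ) ∧
  (∀ i : ℕ, 0 < i → i < d.length →
    ∃ (m : ℕ) (z : Bool), d[i]!.ref = some (m, z) ∧ m < i ∧ m % 2 ≠ i % 2 ∧
      (z = true →
        ∃ φ : Formula, d[m]!.stmt = .form φ ∧ ¬ φ.isAtomic ∧ Attacks d[i]!.stmt φ) ∧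
      (z = false →
        ∃ (k : ℕ) (φ : Formula), d[m]!.ref = some (k, true) ∧ k < m ∧
          d[k]!.stmt = .form φ ∧ Defends d[i]!.stmt d[m]!.stmt φ))

/-- Rule D10: P may assert an atomic formula only if O has asserted it earlier. -/
def RuleD10 (d : List Move) : Prop :=
  ∀ i < d.length, i % 2 = 0 → ∀ a : ℕ, d[i]!.stmt = .form (.atom a) →
    ∃ j < i, j % 2 = 1 ∧ d[j]!.stmt = .form (.atom a)

/-- Rule D13: each P-assertion may be attacked at most once. -/
def RuleD13 (d : List Move) : Prop :=
  ∀ m : ℕ, m % 2 = 0 → ∀ i < d.length, ∀ j < d.length,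
    d[i]!.ref = some (m, true) → d[j]!.ref = some (m, true) → i = j

/-- Rule E: O may only react (attack or defend) against the immediately preceding
P-move. -/
def RuleE (d : List Move) : Prop :=
  ∀ i < d.length, i % 2 = 1 → ∃ z : Bool, d[i]!.ref = some (i - 1, z)

/-- The rule set N = {D10, D13}. -/
def NRules (d : List Move) : Prop := RuleD10 d ∧ RuleD13 d

/-- The rule set CL = {D10, D13, E}. -/
def CLRules (d : List Move) : Prop := RuleD10 d ∧ RuleD13 d ∧ RuleE d

/-- A dialogue commences with `φ` when its initial move is P's assertion of `φ`. -/
def CommencesWith (φ : Formula) (d : List Move) : Prop :=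
  0 < d.length ∧ d[0]!.stmt = .form φ

/-- An `S`-dialogue for `φ` (for a rule set `S`): a dialogue commencing with `φ`
that obeys the structural rules `S`.  These are exactly the branches (identified
with their underlying move sequences) of the `S`-dialogue tree for `φ`. -/
def SDialogueFor (S : List Move → Prop) (φ : Formula) (d : List Move) : Prop :=
  IsDialogue d ∧ S d ∧ CommencesWith φ d

/-- P wins a finite `S`-dialogue for `φ`: it ends with a P-move (the last index,
`d.length - 1`, is even, i.e. `d.length` is odd) and it cannot be extended by any
legal further (O-)move. -/
def WinsFor (S : List Move → Prop) (φ : Formula) (d : List Move) : Prop :=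
  SDialogueFor S φ d ∧ d.length % 2 = 1 ∧ ∀ m : Move, ¬ SDialogueFor S φ (d ++ [m])

/-- An `S`-winning strategy for P for `φ`, modelled as a set `T` of `S`-dialogues for
`φ`: the nodes of a rooted subtree of the `S`-dialogue tree for `φ`, each node being
identified with the dialogue leading from the root to it.  The conditions state that
`T` is a nonempty, prefix-closed set of `S`-dialogues for `φ` (hence a rooted subtree
of the `S`-dialogue tree with the same root), that every branch of `T` is a finite
`S`-dialogue won by P (leaves are wins for P, and there is no infinite branch), that
every node at odd depth (an O-move) has exactly one child, and that every node at
even depth (a P-move) has the same children in `T` as in the full dialogue tree. -/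
structure IsWinningStrategy (S : List Move → Prop) (φ : Formula) (T : Set (List Move)) : Prop where
  nonempty : T.Nonempty
  dialogues : ∀ d ∈ T, SDialogueFor S φ d
  prefix_closed : ∀ d ∈ T, ∀ e : List Move, e <+: d → 0 < e.length → e ∈ T
  leaf_wins : ∀ d ∈ T, (∀ m : Move, d ++ [m] ∉ T) → WinsFor S φ d
  no_infinite_branch : ∀ f : ℕ → Move, ∃ n : ℕ, 0 < n ∧ (List.ofFn fun i : Fin n => f i) ∉ T
  odd_unique_child : ∀ d ∈ T, 0 < d.length → d.length % 2 = 0 → ∃! m : Move, d ++ [m] ∈ T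
  even_all_children : ∀ d ∈ T, d.length % 2 = 1 →
    ∀ m : Move, SDialogueFor S φ (d ++ [m]) → d ++ [m] ∈ T

/-- `φ` is `S`-valid iff P has an `S`-winning strategy for `φ`. -/
def SValid (S : List Move → Prop) (φ : Formula) : Prop :=
  ∃ T : Set (List Move), IsWinningStrategy S φ T

/-- `φ` is N-valid (`⊨_N φ`) iff P has an N-winning strategy for `φ`. -/
def NValid (φ : Formula) : Prop := SValid NRules φ

/-!
N-validity has a purely semantic description: `φ` is N-valid iff it is not contestable under any
valuation. Rules D10 and D13 do not restrict Opponent's defenses. Hence, as soon as Proponent makes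
an attack that admits a defense, Opponent can repeat this defense forever, so conceding a
conjunction, a disjunction or an implication costs Opponent nothing; only a conceded atom or
negation constrains Opponent.

If `φ` is contestable under `v`, Opponent plays so that all assertions of Proponent stay
contestable and all concessions are admissible under `v`, which produces an infinite branch.
Conversely, let Proponent attack only negations and never repeat an assertion. Opponent's replies
are then confined to attacks on Proponent's last assertion, and the play is bounded by the number
of subformulas of `φ`. If Proponent ever runs out of new assertions, the dialogue yields a
Hintikka pair, from which one reads off a valuation contesting `φ`.

Under each valuation every formula is concedable or contestable, and an implication is contestable
exactly when its antecedent is concedable and its consequent is contestable.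
-/

mutual

/-- `χ.Contestable v`: under the valuation `v`, Opponent can answer an assertion of `χ` by
Proponent without ever losing. -/
def Formula.Contestable (v : ℕ → Prop) : Formula → Prop
  | .atom a => ¬ v a
  | .neg α => α.Concedable v
  | .conj α β => α.Contestable v ∨ β.Contestable v
  | .disj α β => α.Contestable v ∧ β.Contestable v
  | .impl α β => α.Concedable v ∧ β.Contestable v

/-- `χ.Concedable v`: under the valuation `v`, Opponent can assert `χ` without ever losing.
This always holds when every attack on `χ` admits a defense, since N lets Opponent repeat a
defense indefinitely. -/
def Formula.Concedable (v : ℕ → Prop) : Formula → Prop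
  | .atom a => v a
  | .neg α => α.Contestable v
  | .conj _ _ => True
  | .disj _ _ => True
  | .impl _ _ => True

end

theorem Formula.concedable_or_contestable (v : ℕ → Prop) (χ : Formula) :
    χ.Concedable v ∨ χ.Contestable v := by
  induction χ with
  | atom a => exact em (v a)
  | neg α ih => exact ih.symm
  | conj | disj | impl => exact .inl trivial

theorem Attacks.not_isAtomic {a : Statement} {χ : Formula} (h : Attacks a χ) : ¬ χ.isAtomic := by
  cases h <;> exact id

theorem Defends.exists_eq_form {s a : Statement} {χ : Formula} (h : Defends s a χ) :
    ∃ σ, s = .form σ := by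
  cases h <;> exact ⟨_, rfl⟩

theorem not_defends_neg {s a : Statement} (γ : Formula) : ¬ Defends s a (.neg γ) :=
  nofun

theorem Formula.contestable_iff_exists_attack {v : ℕ → Prop} {χ : Formula} (hχ : ¬ χ.isAtomic) :
    χ.Contestable v ↔ ∃ a, Attacks a χ ∧ (∀ α, a = .form α → α.Concedable v) ∧
      ∀ σ, Defends (.form σ) a χ → σ.Contestable v := by
  constructor
  · intro h
    cases χ with
    | atom a => exact absurd trivial hχ
    | neg α => exact ⟨_, .neg α, by rintro _ ⟨⟩; exact h, nofun⟩
    | conj α β =>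
      rcases h with h | h
      · exact ⟨_, .conjL α β, nofun, by rintro _ ⟨⟩; exact h⟩
      · exact ⟨_, .conjR α β, nofun, by rintro _ ⟨⟩; exact h⟩
    | disj α β => exact ⟨_, .disj α β, nofun, by rintro _ ⟨⟩; exacts [h.1, h.2]⟩
    | impl α β =>
      exact ⟨_, .impl α β, by rintro _ ⟨⟩; exact h.1, by rintro _ ⟨⟩; exact h.2⟩
  · rintro ⟨_, ⟨⟩, hconcede, hcontest⟩
    · exact .inl (hcontest _ (.conjL _ _))
    · exact .inr (hcontest _ (.conjR _ _))
    · exact ⟨hcontest _ (.disjL _ _), hcontest _ (.disjR _ _)⟩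
    · exact ⟨hconcede _ rfl, hcontest _ (.impl _ _)⟩
    · exact hconcede _ rfl

theorem Formula.Concedable.contestable_or_defends {v : ℕ → Prop} {χ : Formula} {a : Statement}
    (h : χ.Concedable v) (ha : Attacks a χ) :
    (∃ α, a = .form α ∧ α.Contestable v) ∨ ∃ s, Defends s a χ := by
  cases ha with
  | conjL α β => exact .inr ⟨_, .conjL α β⟩
  | conjR α β => exact .inr ⟨_, .conjR α β⟩
  | disj α β => exact .inr ⟨_, .disjL α β⟩
  | impl α β => exact .inr ⟨_, .impl α β⟩
  | neg α => exact .inl ⟨α, rfl, h⟩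

theorem getElem!_concat_of_lt {α : Type*} [Inhabited α] {d : List α} {i : ℕ}
    (h : i < d.length) (a : α) : (d ++ [a])[i]! = d[i]! := by
  grind

theorem getElem!_concat_length {α : Type*} [Inhabited α] (d : List α) (a : α) :
    (d ++ [a])[d.length]! = a := by
  simp

/-- `Reacts d i m`: by the particle rules, `m` may stand at position `i` of a dialogue whose
first `i` moves are those of `d`. -/
inductive Reacts (d : List Move) (i : ℕ) : Move → Prop
  | attack {k : ℕ} {χ : Formula} {a : Statement} (hk : k < i) (hpar : k % 2 ≠ i % 2)
      (hχ : d[k]!.stmt = .form χ) (ha : Attacks a χ) : Reacts d i ⟨a, some (k, true)⟩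
  | defend {k j : ℕ} {χ : Formula} {s : Statement} (hk : k < i) (hpar : k % 2 ≠ i % 2)
      (hj : j < k) (href : d[k]!.ref = some (j, true)) (hχ : d[j]!.stmt = .form χ)
      (hs : Defends s d[k]!.stmt χ) : Reacts d i ⟨s, some (k, false)⟩

theorem reacts_iff {d : List Move} {i : ℕ} {m : Move} : Reacts d i m ↔
    ∃ (k : ℕ) (z : Bool), m.ref = some (k, z) ∧ k < i ∧ k % 2 ≠ i % 2 ∧
      (z = true →
        ∃ χ : Formula, d[k]!.stmt = .form χ ∧ ¬ χ.isAtomic ∧ Attacks m.stmt χ) ∧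
      (z = false →
        ∃ (j : ℕ) (χ : Formula), d[k]!.ref = some (j, true) ∧ j < k ∧
          d[j]!.stmt = .form χ ∧ Defends m.stmt d[k]!.stmt χ) := by
  constructor
  · rintro (⟨hk, hpar, hχ, ha⟩ | ⟨hk, hpar, hj, href, hχ, hs⟩)
    · exact ⟨_, true, rfl, hk, hpar, fun _ => ⟨_, hχ, ha.not_isAtomic, ha⟩, nofun⟩
    · exact ⟨_, false, rfl, hk, hpar, nofun, fun _ => ⟨_, _, href, hj, hχ, hs⟩⟩
  · obtain ⟨s, r⟩ := m
    rintro ⟨k, _ | _, rfl, hk, hpar, hattack, hdefend⟩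
    · obtain ⟨j, χ, href, hj, hχ, hs⟩ := hdefend rfl
      exact .defend hk hpar hj href hχ hs
    · obtain ⟨χ, hχ, -, ha⟩ := hattack rfl
      exact .attack hk hpar hχ ha

theorem Reacts.congr {d e : List Move} {i : ℕ} {m : Move} (h : Reacts d i m)
    (hde : ∀ j < i, e[j]! = d[j]!) : Reacts e i m := by
  cases h with
  | attack hk hpar hχ ha => exact .attack hk hpar (by rwa [hde _ hk]) ha
  | defend hk hpar hj href hχ hs =>
    rw [← hde _ hk] at href hs
    rw [← hde _ (hj.trans hk)] at hχ
    exact .defend hk hpar hj href hχ hs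

theorem reacts_concat {d : List Move} {i : ℕ} {m x : Move} (hi : i ≤ d.length) :
    Reacts (d ++ [x]) i m ↔ Reacts d i m :=
  have hde : ∀ j < i, (d ++ [x])[j]! = d[j]! := fun _ hj =>
    getElem!_concat_of_lt (hj.trans_le hi) x
  ⟨fun h => h.congr fun j hj => (hde j hj).symm, fun h => h.congr hde⟩

theorem isDialogue_concat {d : List Move} {m : Move} (hd : 0 < d.length) :
    IsDialogue (d ++ [m]) ↔ IsDialogue d ∧ Reacts d d.length m := by
  simp only [IsDialogue, ← reacts_iff, List.length_append, List.length_singleton]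
  grind [reacts_concat, getElem!_concat_of_lt, getElem!_concat_length]

theorem IsDialogue.reacts {d : List Move} (h : IsDialogue d) {i : ℕ} (hpos : 0 < i)
    (hi : i < d.length) : Reacts d i d[i]! :=
  reacts_iff.2 (h.2 i hpos hi)

theorem IsDialogue.reacts_of_ref {d : List Move} (h : IsDialogue d) {i k : ℕ} {z : Bool}
    (hi : i < d.length) (href : d[i]!.ref = some (k, z)) : Reacts d i d[i]! := by
  refine h.reacts (Nat.pos_of_ne_zero ?_) hi
  rintro rfl
  rw [(h.1 hi).1] at href
  cases href

theorem IsDialogue.ref_lt {d : List Move} (h : IsDialogue d) {i k : ℕ} {z : Bool}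
    (hi : i < d.length) (href : d[i]!.ref = some (k, z)) : k < i := by
  have hreacts := h.reacts_of_ref hi href
  generalize d[i]! = m at hreacts href
  cases hreacts <;> cases href <;> assumption

theorem IsDialogue.attacks_of_ref {d : List Move} (h : IsDialogue d) {i k : ℕ} {χ : Formula}
    (hi : i < d.length) (href : d[i]!.ref = some (k, true)) (hχ : d[k]!.stmt = .form χ) :
    k % 2 ≠ i % 2 ∧ Attacks d[i]!.stmt χ := by
  have hreacts := h.reacts_of_ref hi href
  generalize d[i]! = m at hreacts href
  cases hreacts with
  | attack hk hpar hβ ha =>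
    cases href
    exact ⟨hpar, Statement.form.inj (hβ.symm.trans hχ) ▸ ha⟩
  | defend => cases href

/-- `Asserted c d χ`: one of the moves of `d` at positions of parity `c` asserts `χ`; parity
`0` stands for Proponent, parity `1` for Opponent. -/
def Asserted (c : ℕ) (d : List Move) (χ : Formula) : Prop :=
  ∃ i < d.length, i % 2 = c ∧ d[i]!.stmt = .form χ

/-- `AttackedBy c d a χ`: one of the moves of `d` at positions of parity `c` is the attack `a`
on an earlier assertion of `χ`. -/
def AttackedBy (c : ℕ) (d : List Move) (a : Statement) (χ : Formula) : Prop :=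
  ∃ i < d.length, i % 2 = c ∧ d[i]!.stmt = a ∧
    ∃ j < i, d[i]!.ref = some (j, true) ∧ d[j]!.stmt = .form χ

theorem asserted_concat {c : ℕ} {d : List Move} {m : Move} {χ : Formula} :
    Asserted c (d ++ [m]) χ ↔ Asserted c d χ ∨ d.length % 2 = c ∧ m.stmt = .form χ := by
  simp only [Asserted, List.length_append, List.length_singleton, Nat.exists_lt_succ_right,
    getElem!_concat_length]
  grind [getElem!_concat_of_lt]

theorem attackedBy_concat {c : ℕ} {d : List Move} {m : Move} {a : Statement} {χ : Formula} :
    AttackedBy c (d ++ [m]) a χ ↔ AttackedBy c d a χ ∨ d.length % 2 = c ∧ m.stmt = a ∧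
      ∃ j < d.length, m.ref = some (j, true) ∧ d[j]!.stmt = .form χ := by
  have hold {i : ℕ} (hi : i < d.length) : (∃ j < i, (d ++ [m])[i]!.ref = some (j, true) ∧
      (d ++ [m])[j]!.stmt = .form χ) ↔ ∃ j < i, d[i]!.ref = some (j, true) ∧
        d[j]!.stmt = .form χ :=
    exists_congr fun j => and_congr_right fun hj => by
      rw [getElem!_concat_of_lt hi, getElem!_concat_of_lt (hj.trans hi)]
  simp only [AttackedBy, List.length_append, List.length_singleton, Nat.exists_lt_succ_right,
    getElem!_concat_length]
  refine or_congr (exists_congr fun i => and_congr_right fun hi => ?_) ?_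
  · rw [hold hi, getElem!_concat_of_lt hi]
  · refine and_congr_right' (and_congr_right' (exists_congr fun j => and_congr_right fun hj => ?_))
    rw [getElem!_concat_of_lt hj]

theorem RuleD10.concat {d : List Move} {m : Move} (h : RuleD10 d)
    (hm : d.length % 2 = 0 → ∀ a, m.stmt = .form (.atom a) → Asserted 1 d (.atom a)) :
    RuleD10 (d ++ [m]) := by
  have hold {i : ℕ} (hi : i ≤ d.length) {a : ℕ} :
      (∃ j < i, j % 2 = 1 ∧ d[j]!.stmt = .form (.atom a)) →
        ∃ j < i, j % 2 = 1 ∧ (d ++ [m])[j]!.stmt = .form (.atom a) := by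
    rintro ⟨j, hj, hodd, ha⟩
    exact ⟨j, hj, hodd, by rwa [getElem!_concat_of_lt (hj.trans_le hi)]⟩
  simp only [RuleD10, List.length_append, List.length_singleton, Nat.forall_lt_succ_right,
    getElem!_concat_length]
  refine ⟨fun i hi heven a ha => hold hi.le ?_, fun heven a ha => hold le_rfl (hm heven a ha)⟩
  rw [getElem!_concat_of_lt hi] at ha
  exact h i hi heven a ha

theorem RuleD13.concat {d : List Move} {m : Move} (h : RuleD13 d)
    (hm : ∀ k, k % 2 = 0 → m.ref = some (k, true) → ∀ i < d.length, d[i]!.ref ≠ some (k, true)) :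
    RuleD13 (d ++ [m]) := by
  simp only [RuleD13, List.length_append, List.length_singleton, Nat.forall_lt_succ_right,
    getElem!_concat_length] at h ⊢
  grind [getElem!_concat_of_lt]

theorem SDialogueFor.length_pos {S : List Move → Prop} {φ : Formula} {d : List Move}
    (h : SDialogueFor S φ d) : 0 < d.length :=
  h.2.2.1

theorem SDialogueFor.reacts_of_concat {S : List Move → Prop} {φ : Formula} {d : List Move}
    {m : Move} (h : SDialogueFor S φ (d ++ [m])) (hd : 0 < d.length) : Reacts d d.length m :=
  ((isDialogue_concat hd).1 h.1).2

theorem SDialogueFor.concat {φ : Formula} {d : List Move} {m : Move}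
    (h : SDialogueFor NRules φ d) (hreacts : Reacts d d.length m)
    (hD10 : d.length % 2 = 0 → ∀ a, m.stmt = .form (.atom a) → Asserted 1 d (.atom a))
    (hD13 : ∀ k, k % 2 = 0 → m.ref = some (k, true) →
      ∀ i < d.length, d[i]!.ref ≠ some (k, true)) :
    SDialogueFor NRules φ (d ++ [m]) := by
  obtain ⟨hdia, ⟨h10, h13⟩, hpos, hφ⟩ := h
  refine ⟨(isDialogue_concat hpos).2 ⟨hdia, hreacts⟩, ⟨h10.concat hD10, h13.concat hD13⟩,
    by simp, ?_⟩
  rwa [getElem!_concat_of_lt hpos]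

theorem SDialogueFor.eq_singleton {S : List Move → Prop} {φ : Formula} {m : Move}
    (h : SDialogueFor S φ [m]) : m = ⟨.form φ, none⟩ := by
  obtain ⟨⟨hroot, -⟩, -, -, hφ⟩ := h
  obtain ⟨href, -⟩ := hroot (by simp)
  cases m
  simp_all

theorem sDialogueFor_singleton {φ : Formula} (hφ : ¬ φ.isAtomic) :
    SDialogueFor NRules φ [⟨.form φ, none⟩] := by
  refine ⟨⟨fun _ => ⟨rfl, φ, rfl⟩, ?_⟩, ⟨?_, ?_⟩, by simp, rfl⟩
  · intro i hpos hi
    simp only [List.length_singleton] at hi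
    omega
  · intro i hi _ a ha
    obtain rfl : i = 0 := by simpa using hi
    cases ha
    exact absurd trivial hφ
  · intro k _ i hi j hj _ _
    simp only [List.length_singleton] at hi hj
    omega

/-! ## Strategies -/

theorem exists_forall_ofFn {α : Type*} {G : List α → Prop} (hnil : G [])
    (hstep : ∀ d, G d → ∃ a, G (d ++ [a])) :
    ∃ f : ℕ → α, ∀ n, G (List.ofFn fun i : Fin n => f i) := by
  have : Nonempty α := (hstep [] hnil).nonempty
  choose! next hnext using hstep
  let branch : ℕ → List α := fun n => (fun d => d ++ [next d])^[n] []
  have hbranch (n : ℕ) : (List.ofFn fun i : Fin n => next (branch i)) = branch n := by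
    induction n with
    | zero => rfl
    | succ n ih =>
      rw [List.ofFn_succ_last]
      simp only [Fin.val_castSucc, Fin.val_last, ih, branch, Function.iterate_succ_apply']
  refine ⟨fun n => next (branch n), fun n => ?_⟩
  rw [hbranch]
  induction n with
  | zero => exact hnil
  | succ n ih =>
    simp only [branch, Function.iterate_succ_apply']
    exact hnext _ ih

theorem IsWinningStrategy.root_mem {S : List Move → Prop} {φ : Formula} {T : Set (List Move)}
    (h : IsWinningStrategy S φ T) : [⟨.form φ, none⟩] ∈ T := by
  obtain ⟨d, hd⟩ := h.nonempty
  cases d with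
  | nil => exact absurd (h.dialogues _ hd).length_pos (lt_irrefl 0)
  | cons m d =>
    have hm : [m] ∈ T := h.prefix_closed _ hd [m] ⟨d, rfl⟩ Nat.one_pos
    rwa [(h.dialogues _ hm).eq_singleton] at hm

theorem not_sValid_of_trap {S : List Move → Prop} {φ : Formula} {Bad : List Move → Prop}
    (hroot : Bad [⟨.form φ, none⟩])
    (hodd : ∀ d, SDialogueFor S φ d → Bad d → d.length % 2 = 1 →
      ∃ m, SDialogueFor S φ (d ++ [m]) ∧ Bad (d ++ [m]))
    (heven : ∀ d p, SDialogueFor S φ d → SDialogueFor S φ (d ++ [p]) → Bad d →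
      d.length % 2 = 0 → Bad (d ++ [p])) :
    ¬ SValid S φ := by
  rintro ⟨T, hT⟩
  suffices hstep : ∀ d, d = [] ∨ d ∈ T ∧ Bad d →
      ∃ m, d ++ [m] = [] ∨ d ++ [m] ∈ T ∧ Bad (d ++ [m]) by
    obtain ⟨f, hf⟩ := exists_forall_ofFn (G := fun d => d = [] ∨ d ∈ T ∧ Bad d) (.inl rfl) hstep
    obtain ⟨n, hn, hmem⟩ := hT.no_infinite_branch f
    rcases hf n with hnil | ⟨hT, -⟩
    · exact hn.ne' (List.ofFn_eq_nil_iff.1 hnil)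
    · exact hmem hT
  rintro d (rfl | ⟨hd, hbad⟩)
  · exact ⟨_, .inr ⟨hT.root_mem, hroot⟩⟩
  · have hdia := hT.dialogues d hd
    rcases Nat.mod_two_eq_zero_or_one d.length with hlen | hlen
    · obtain ⟨p, hp, -⟩ := hT.odd_unique_child d hd hdia.length_pos hlen
      exact ⟨p, .inr ⟨hp, heven d p hdia (hT.dialogues _ hp) hbad hlen⟩⟩
    · obtain ⟨m, hm, hbad⟩ := hodd d hdia hbad hlen
      exact ⟨m, .inr ⟨hT.even_all_children d hd hlen m hm, hbad⟩⟩

/-- `Play S φ σ d`: the `S`-dialogue `d` for `φ` can arise when Proponent answers every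
dialogue `e` ending with a move of Opponent by the move `σ e`. -/
inductive Play (S : List Move → Prop) (φ : Formula) (σ : List Move → Move) : List Move → Prop
  | root : Play S φ σ [⟨.form φ, none⟩]
  | opponent {d : List Move} {m : Move} (hd : Play S φ σ d) (hlen : d.length % 2 = 1)
      (hm : SDialogueFor S φ (d ++ [m])) : Play S φ σ (d ++ [m])
  | proponent {d : List Move} (hd : Play S φ σ d) (hlen : d.length % 2 = 0) :
      Play S φ σ (d ++ [σ d])

theorem Play.of_concat {S : List Move → Prop} {φ : Formula} {σ : List Move → Move}
    {d : List Move} {m : Move} (h : Play S φ σ (d ++ [m])) (hd : 0 < d.length) :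
    Play S φ σ d ∧ (d.length % 2 = 0 → m = σ d) := by
  generalize he : d ++ [m] = e at h
  cases h with
  | root =>
    obtain rfl : d = [] := by simpa using congrArg List.length he
    exact absurd hd (lt_irrefl 0)
  | opponent hd' hlen =>
    obtain ⟨rfl, -⟩ := List.append_inj' he rfl
    exact ⟨hd', by omega⟩
  | proponent hd' =>
    obtain ⟨rfl, hm⟩ := List.append_inj' he rfl
    exact ⟨hd', fun _ => List.singleton_inj.1 hm⟩

theorem Play.of_isPrefix {S : List Move → Prop} {φ : Formula} {σ : List Move → Move}
    {d e : List Move} (h : Play S φ σ d) (he : e <+: d) (hpos : 0 < e.length) :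
    Play S φ σ e := by
  induction d using List.reverseRecOn with
  | nil =>
    rw [List.prefix_nil.1 he] at hpos
    exact absurd hpos (lt_irrefl 0)
  | append_singleton d m ih =>
    rcases List.prefix_concat_iff.1 he with rfl | he
    · exact h
    · exact ih (h.of_concat (hpos.trans_le he.length_le)).1 he

section Invariant

variable {S : List Move → Prop} {φ : Formula} {Good : List Move → Prop}

theorem Play.invariant {σ : List Move → Move} (hroot : Good [⟨.form φ, none⟩])
    (hdia : ∀ d, Good d → SDialogueFor S φ d)
    (hσ : ∀ d m, Good d → d.length % 2 = 1 → SDialogueFor S φ (d ++ [m]) →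
      Good (d ++ [m] ++ [σ (d ++ [m])]))
    {d : List Move} (h : Play S φ σ d) :
    SDialogueFor S φ d ∧ (d.length % 2 = 1 → Good d) ∧ (d.length % 2 = 0 → Good (d ++ [σ d])) := by
  induction h with
  | root => exact ⟨hdia _ hroot, fun _ => hroot, nofun⟩
  | @opponent d m _ hlen hm ih =>
    refine ⟨hm, fun h => ?_, fun _ => hσ d m (ih.2.1 hlen) hlen hm⟩
    simp only [List.length_append, List.length_singleton] at h
    omega
  | @proponent d _ hlen ih =>
    refine ⟨hdia _ (ih.2.2 hlen), fun _ => ih.2.2 hlen, fun h => ?_⟩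
    simp only [List.length_append, List.length_singleton] at h
    omega

theorem sValid_of_invariant (hroot : Good [⟨.form φ, none⟩])
    (hdia : ∀ d, Good d → SDialogueFor S φ d)
    (hstep : ∀ d m, Good d → d.length % 2 = 1 → SDialogueFor S φ (d ++ [m]) →
      ∃ p, Good (d ++ [m] ++ [p]))
    (hfin : ∀ f : ℕ → Move, ∃ n, n % 2 = 1 ∧ ¬ Good (List.ofFn fun i : Fin n => f i)) :
    SValid S φ := by
  let σ : List Move → Move := fun e => Classical.epsilon fun p => Good (e ++ [p])
  have hplay {d : List Move} (h : Play S φ σ d) := h.invariant hroot hdia fun d m hd hlen hm =>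
    Classical.epsilon_spec (hstep d m hd hlen hm)
  refine ⟨{d | Play S φ σ d}, ⟨⟨_, .root⟩, fun d hd => (hplay hd).1,
    fun d hd e he hpos => hd.of_isPrefix he hpos, ?_, ?_, ?_, fun d hd hlen m hm =>
      .opponent hd hlen hm⟩⟩
  · intro d hd hleaf
    rcases Nat.mod_two_eq_zero_or_one d.length with hlen | hlen
    · exact absurd (.proponent hd hlen) (hleaf (σ d))
    · exact ⟨(hplay hd).1, hlen, fun m hm => hleaf m (.opponent hd hlen hm)⟩
  · intro f
    obtain ⟨n, hodd, hn⟩ := hfin f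
    exact ⟨n, by omega, fun h => hn ((hplay h).2.1 (by rwa [List.length_ofFn]))⟩
  · exact fun d hd hpos hlen => ⟨σ d, .proponent hd hlen, fun m hm => (hm.of_concat hpos).2 hlen⟩

end Invariant

/-! ## Soundness -/

/-- A dialogue is stalled when Proponent has made an attack that Opponent is able to defend:
from then on Opponent can repeat that defense forever. -/
def Stalled (d : List Move) : Prop :=
  ∃ a χ s, AttackedBy 0 d a χ ∧ Defends s a χ

theorem Stalled.concat {d : List Move} (h : Stalled d) (m : Move) : Stalled (d ++ [m]) := by
  obtain ⟨a, χ, s, hattack, hs⟩ := h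
  exact ⟨a, χ, s, attackedBy_concat.2 (.inl hattack), hs⟩

theorem Stalled.exists_move {φ : Formula} {d : List Move} (hstall : Stalled d)
    (h : SDialogueFor NRules φ d) (hlen : d.length % 2 = 1) :
    ∃ m, SDialogueFor NRules φ (d ++ [m]) := by
  obtain ⟨_, χ, s, ⟨i, hi, heven, rfl, j, hj, href, hχ⟩, hs⟩ := hstall
  exact ⟨_, h.concat (.defend hi (by omega) hj href hχ hs) (by omega) nofun⟩

/-- `Tenable v d`: every obligation incurred in `d` so far is one that Opponent can cope with
under the valuation `v`. -/
structure Tenable (v : ℕ → Prop) (d : List Move) : Prop where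
  proponent : ∀ i < d.length, i % 2 = 0 → ∃ χ, d[i]!.stmt = .form χ ∧ χ.Contestable v
  opponent : ∀ χ, Asserted 1 d χ → χ.Concedable v
  defenses : ∀ a χ σ, AttackedBy 1 d a χ → Defends (.form σ) a χ → σ.Contestable v

theorem Tenable.singleton {v : ℕ → Prop} {φ : Formula} (hφ : φ.Contestable v) :
    Tenable v [⟨.form φ, none⟩] where
  proponent i hi _ := by
    obtain rfl : i = 0 := by simpa using hi
    exact ⟨φ, rfl, hφ⟩
  opponent := by
    rintro χ ⟨i, hi, hodd, -⟩
    simp only [List.length_singleton] at hi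
    omega
  defenses := by
    rintro a χ σ ⟨i, hi, hodd, -⟩
    simp only [List.length_singleton] at hi
    omega

theorem Tenable.concat_assertion {v : ℕ → Prop} {d : List Move} {p : Move} {χ : Formula}
    (h : Tenable v d) (hlen : d.length % 2 = 0) (hp : p.stmt = .form χ) (hχ : χ.Contestable v) :
    Tenable v (d ++ [p]) where
  proponent := by
    simp only [List.length_append, List.length_singleton, Nat.forall_lt_succ_right,
      getElem!_concat_length]
    refine ⟨fun i hi => ?_, fun _ => ⟨χ, hp, hχ⟩⟩
    rw [getElem!_concat_of_lt hi]
    exact h.proponent i hi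
  opponent χ hχ := h.opponent χ ((asserted_concat.1 hχ).resolve_right (by omega))
  defenses a χ σ ha := h.defenses a χ σ ((attackedBy_concat.1 ha).resolve_right (by omega))

theorem Tenable.concat_attack {v : ℕ → Prop} {d : List Move} {a : Statement} {k : ℕ}
    {χ : Formula} (h : Tenable v d) (hlen : d.length % 2 = 1) (hk : d[k]!.stmt = .form χ)
    (hconcede : ∀ α, a = .form α → α.Concedable v)
    (hcontest : ∀ σ, Defends (.form σ) a χ → σ.Contestable v) :
    Tenable v (d ++ [⟨a, some (k, true)⟩]) where
  proponent := by
    simp only [List.length_append, List.length_singleton, Nat.forall_lt_succ_right]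
    refine ⟨fun i hi => ?_, by omega⟩
    rw [getElem!_concat_of_lt hi]
    exact h.proponent i hi
  opponent α hα := by
    rcases asserted_concat.1 hα with hα | ⟨-, hα⟩
    · exact h.opponent α hα
    · exact hconcede α hα
  defenses b β σ hb hσ := by
    rcases attackedBy_concat.1 hb with hb | ⟨-, rfl, j, -, ⟨⟩, hβ⟩
    · exact h.defenses b β σ hb hσ
    · obtain rfl : χ = β := Statement.form.inj (hk.symm.trans hβ)
      exact hcontest σ hσ

theorem Tenable.exists_attack {v : ℕ → Prop} {φ : Formula} {d : List Move} (htenable : Tenable v d)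
    (h : SDialogueFor NRules φ d) (hlen : d.length % 2 = 1) :
    ∃ m, SDialogueFor NRules φ (d ++ [m]) ∧ Tenable v (d ++ [m]) := by
  have hlast : d.length - 1 < d.length := by omega
  have heven : (d.length - 1) % 2 = 0 := by omega
  obtain ⟨χ, hχ, hcontest⟩ := htenable.proponent _ hlast heven
  have hnonatomic : ¬ χ.isAtomic := by
    rintro hatomic
    cases χ with
    | atom a =>
      obtain ⟨j, hj, hodd, ha⟩ := h.2.1.1 _ hlast heven a hχ
      exact hcontest (htenable.opponent _ ⟨j, hj.trans hlast, hodd, ha⟩)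
    | neg | conj | disj | impl => exact hatomic
  obtain ⟨a, ha, hconcede, hdefense⟩ :=
    (Formula.contestable_iff_exists_attack hnonatomic).1 hcontest
  refine ⟨_, h.concat (.attack hlast (by omega) hχ ha) (by omega) ?_,
    htenable.concat_attack hlen hχ hconcede hdefense⟩
  rintro k - ⟨⟩ i hi href
  have := h.1.ref_lt hi href
  omega

theorem Tenable.concat {v : ℕ → Prop} {d : List Move} {p : Move} (htenable : Tenable v d)
    (hlen : d.length % 2 = 0) (hp : Reacts d d.length p) :
    Stalled (d ++ [p]) ∨ Tenable v (d ++ [p]) := by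
  cases hp with
  | @attack k χ a hk hpar hχ ha =>
    rcases (htenable.opponent χ ⟨k, hk, by omega, hχ⟩).contestable_or_defends ha with
      ⟨α, rfl, hα⟩ | ⟨s, hs⟩
    · exact .inr (htenable.concat_assertion hlen rfl hα)
    · exact .inl ⟨a, χ, s, attackedBy_concat.2 (.inr ⟨hlen, rfl, k, hk, rfl, hχ⟩), hs⟩
  | @defend k j χ s hk hpar hj href hχ hs =>
    obtain ⟨σ, rfl⟩ := hs.exists_eq_form
    exact .inr (htenable.concat_assertion hlen rfl
      (htenable.defenses _ χ σ ⟨k, hk, by omega, rfl, j, hj, href, hχ⟩ hs))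

theorem NValid.not_contestable {φ : Formula} (h : NValid φ) (v : ℕ → Prop) :
    ¬ φ.Contestable v := by
  intro hφ
  refine not_sValid_of_trap (Bad := fun d => Stalled d ∨ Tenable v d)
    (.inr (.singleton hφ)) ?_ ?_ h
  · rintro d hd (hstall | htenable) hlen
    · obtain ⟨m, hm⟩ := hstall.exists_move hd hlen
      exact ⟨m, hm, .inl (hstall.concat m)⟩
    · obtain ⟨m, hm, htenable⟩ := htenable.exists_attack hd hlen
      exact ⟨m, hm, .inr htenable⟩
  · rintro d p hd hp (hstall | htenable) hlen
    · exact .inl (hstall.concat p)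
    · exact htenable.concat hlen (hp.reacts_of_concat hd.length_pos)

/-! ## Completeness -/

/-- A Hintikka pair: `A` collects assertions of Proponent that Opponent has refuted, `B` the
assertions of Opponent supporting the refutations. -/
structure IsHintikka (A B : Formula → Prop) : Prop where
  atom : ∀ a, A (.atom a) → ¬ B (.atom a)
  attacked : ∀ χ, A χ → ¬ χ.isAtomic → ∃ a, Attacks a χ ∧ (∀ α, a = .form α → B α) ∧
    ∀ σ, Defends (.form σ) a χ → A σ
  neg : ∀ γ, B (.neg γ) → A γ

theorem IsHintikka.contestable_and_concedable {A B : Formula → Prop} (h : IsHintikka A B)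
    (χ : Formula) : (A χ → χ.Contestable fun a => B (.atom a)) ∧
      (B χ → χ.Concedable fun a => B (.atom a)) := by
  induction χ with
  | atom a => exact ⟨h.atom a, id⟩
  | neg α ih =>
    refine ⟨fun hA => ?_, fun hB => ih.1 (h.neg α hB)⟩
    obtain ⟨_, ⟨⟩, hattack, -⟩ := h.attacked _ hA id
    exact ih.2 (hattack α rfl)
  | conj α β ihα ihβ =>
    refine ⟨fun hA => ?_, fun _ => trivial⟩
    obtain ⟨_, ⟨⟩ | ⟨⟩, -, hdefense⟩ := h.attacked _ hA id
    · exact .inl (ihα.1 (hdefense α (.conjL α β)))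
    · exact .inr (ihβ.1 (hdefense β (.conjR α β)))
  | disj α β ihα ihβ =>
    refine ⟨fun hA => ?_, fun _ => trivial⟩
    obtain ⟨_, ⟨⟩, -, hdefense⟩ := h.attacked _ hA id
    exact ⟨ihα.1 (hdefense α (.disjL α β)), ihβ.1 (hdefense β (.disjR α β))⟩
  | impl α β ihα ihβ =>
    refine ⟨fun hA => ?_, fun _ => trivial⟩
    obtain ⟨_, ⟨⟩, hattack, hdefense⟩ := h.attacked _ hA id
    exact ⟨ihα.2 (hattack α rfl), ihβ.1 (hdefense β (.impl α β))⟩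

/-- The finite set of subformulas of a formula, including the formula itself. -/
def Formula.subformulas : Formula → Finset Formula
  | .atom a => {.atom a}
  | .neg α => insert (.neg α) α.subformulas
  | .conj α β => insert (.conj α β) (α.subformulas ∪ β.subformulas)
  | .disj α β => insert (.disj α β) (α.subformulas ∪ β.subformulas)
  | .impl α β => insert (.impl α β) (α.subformulas ∪ β.subformulas)

theorem Formula.mem_subformulas_self (φ : Formula) : φ ∈ φ.subformulas := by
  cases φ <;> simp [subformulas]

theorem Formula.subformulas_subset {φ χ : Formula} (h : χ ∈ φ.subformulas) :
    χ.subformulas ⊆ φ.subformulas := by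
  induction φ <;> grind [subformulas]

theorem Attacks.mem_subformulas {α χ : Formula} (h : Attacks (.form α) χ) :
    α ∈ χ.subformulas := by
  cases h <;> simp [Formula.subformulas, Formula.mem_subformulas_self]

theorem Defends.mem_subformulas {σ χ : Formula} {a : Statement} (h : Defends (.form σ) a χ) :
    σ ∈ χ.subformulas := by
  cases h <;> simp [Formula.subformulas, Formula.mem_subformulas_self]

theorem SDialogueFor.mem_subformulas {S : List Move → Prop} {φ χ : Formula} {d : List Move}
    (h : SDialogueFor S φ d) {i : ℕ} (hi : i < d.length) (hχ : d[i]!.stmt = .form χ) :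
    χ ∈ φ.subformulas := by
  induction i using Nat.strong_induction_on generalizing χ with
  | _ i ih =>
    rcases Nat.eq_zero_or_pos i with rfl | hpos
    · obtain rfl : φ = χ := Statement.form.inj (h.2.2.2.symm.trans hχ)
      exact φ.mem_subformulas_self
    · have hreacts := h.1.reacts hpos hi
      generalize d[i]! = m at hreacts hχ
      cases hreacts with
      | attack hk _ hβ ha =>
        subst hχ
        exact Formula.subformulas_subset (ih _ hk (hk.trans hi) hβ) ha.mem_subformulas
      | defend hk _ hj _ hβ hs =>
        subst hχ
        have hji := hj.trans hk
        exact Formula.subformulas_subset (ih _ hji (hji.trans hi) hβ) hs.mem_subformulas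

/-- A focused dialogue is one in which Proponent never repeats an assertion and attacks only
negations, and in which Opponent has attacked every assertion of Proponent other than a final
one. Opponent's possible replies are then confined to attacks on Proponent's last assertion. -/
structure Focused (φ : Formula) (d : List Move) : Prop where
  dialogue : SDialogueFor NRules φ d
  assertion : ∀ i < d.length, i % 2 = 0 → ∃ χ, d[i]!.stmt = .form χ
  stmt_ne : ∀ j < d.length, j % 2 = 0 → ∀ i < j, i % 2 = 0 → d[i]!.stmt ≠ d[j]!.stmt
  attacked : ∀ k, k % 2 = 0 → k + 1 < d.length → ∃ i < d.length, d[i]!.ref = some (k, true)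
  attacks_neg : ∀ a χ, AttackedBy 0 d a χ → ∃ γ, χ = .neg γ

namespace Focused

variable {φ : Formula} {d : List Move}

theorem singleton (hφ : ¬ φ.isAtomic) : Focused φ [⟨.form φ, none⟩] where
  dialogue := sDialogueFor_singleton hφ
  assertion i hi _ := by
    obtain rfl : i = 0 := by simpa using hi
    exact ⟨φ, rfl⟩
  stmt_ne j hj _ i hi := by
    simp only [List.length_singleton] at hj
    omega
  attacked k _ hk := by
    simp only [List.length_singleton] at hk
    omega
  attacks_neg := by
    rintro a χ ⟨i, hi, -, -, j, hj, -⟩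
    simp only [List.length_singleton] at hi
    omega

theorem half_length_le_card (h : Focused φ d) : (d.length + 1) / 2 ≤ φ.subformulas.card := by
  have hlt {i : ℕ} (hi : i ∈ Finset.range ((d.length + 1) / 2)) : 2 * i < d.length := by
    rw [Finset.mem_range] at hi
    omega
  calc (d.length + 1) / 2 = (Finset.range ((d.length + 1) / 2)).card := by simp
    _ ≤ (φ.subformulas.image Statement.form).card := by
      refine Finset.card_le_card_of_injOn (fun i => d[2 * i]!.stmt) (fun i hi => ?_)
        fun i hi j hj hij => ?_
      · obtain ⟨χ, hχ⟩ := h.assertion _ (hlt hi) (by omega)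
        exact Finset.mem_coe.2 (Finset.mem_image.2
          ⟨χ, h.dialogue.mem_subformulas (hlt hi) hχ, hχ.symm⟩)
      · rcases lt_trichotomy i j with hlt_ij | rfl | hlt_ji
        · exact absurd hij (h.stmt_ne _ (hlt hj) (by omega) _ (by omega) (by omega))
        · rfl
        · exact absurd hij.symm (h.stmt_ne _ (hlt hi) (by omega) _ (by omega) (by omega))
    _ ≤ φ.subformulas.card := Finset.card_image_le

theorem ref_eq_of_opponent (h : Focused φ d) (hlen : d.length % 2 = 1) {m : Move}
    (hm : SDialogueFor NRules φ (d ++ [m])) : m.ref = some (d.length - 1, true) := by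
  cases hm.reacts_of_concat h.dialogue.length_pos with
  | @attack k χ a hk hpar hχ ha =>
    suffices ¬ k + 1 < d.length by
      obtain rfl : k = d.length - 1 := by omega
      rfl
    intro hk'
    obtain ⟨i, hi, href⟩ := h.attacked k (by omega) hk'
    refine hi.ne (hm.2.1.2 k (by omega) i ?_ d.length ?_ ?_ ?_)
    · simp only [List.length_append]
      omega
    · simp
    · rwa [getElem!_concat_of_lt hi]
    · rw [getElem!_concat_length]
  | @defend k j χ s hk hpar hj href hχ hs =>
    obtain ⟨γ, rfl⟩ := h.attacks_neg _ χ ⟨k, hk, by omega, rfl, j, hj, href, hχ⟩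
    exact absurd hs (not_defends_neg γ)

theorem concat (h : Focused φ d) {m : Move} (hm : SDialogueFor NRules φ (d ++ [m]))
    (hassertion : d.length % 2 = 0 → ∃ χ, m.stmt = .form χ ∧ ¬ Asserted 0 d χ)
    (hattacked : ∀ k, k % 2 = 0 → k + 1 = d.length → m.ref = some (k, true))
    (hneg : d.length % 2 = 0 → ∀ k χ, m.ref = some (k, true) → d[k]!.stmt = .form χ →
      ∃ γ, χ = .neg γ) :
    Focused φ (d ++ [m]) where
  dialogue := hm
  assertion := by
    simp only [List.length_append, List.length_singleton, Nat.forall_lt_succ_right,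
      getElem!_concat_length]
    refine ⟨fun i hi => ?_, fun heven => (hassertion heven).imp fun _ => And.left⟩
    rw [getElem!_concat_of_lt hi]
    exact h.assertion i hi
  stmt_ne := by
    simp only [List.length_append, List.length_singleton, Nat.forall_lt_succ_right,
      getElem!_concat_length]
    refine ⟨fun j hj heven i hi => ?_, fun heven i hi hi_even heq => ?_⟩
    · rw [getElem!_concat_of_lt hj, getElem!_concat_of_lt (hi.trans hj)]
      exact h.stmt_ne j hj heven i hi
    · obtain ⟨χ, hχ, hfresh⟩ := hassertion heven
      rw [getElem!_concat_of_lt hi, hχ] at heq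
      exact hfresh ⟨i, hi, hi_even, heq⟩
  attacked k heven hk := by
    simp only [List.length_append, List.length_singleton, Nat.exists_lt_succ_right,
      getElem!_concat_length] at hk ⊢
    rcases (Nat.lt_succ_iff.1 hk).lt_or_eq with hk | hk
    · obtain ⟨i, hi, href⟩ := h.attacked k heven hk
      exact .inl ⟨i, hi, by rwa [getElem!_concat_of_lt hi]⟩
    · exact .inr (hattacked k heven hk)
  attacks_neg a χ ha := by
    rcases attackedBy_concat.1 ha with ha | ⟨hlen, -, k, -, href, hχ⟩
    · exact h.attacks_neg a χ ha
    · exact hneg hlen k χ href hχ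

theorem concat_opponent (h : Focused φ d) (hlen : d.length % 2 = 1) {m : Move}
    (hm : SDialogueFor NRules φ (d ++ [m])) : Focused φ (d ++ [m]) := by
  refine h.concat hm (by omega) (fun k _ hk => ?_) (by omega)
  rw [h.ref_eq_of_opponent hlen hm, ← hk, Nat.add_sub_cancel]

theorem exists_attackedBy (h : Focused φ d) (hlen : d.length % 2 = 0) {χ : Formula}
    (hχ : Asserted 0 d χ) : ∃ a, Attacks a χ ∧ AttackedBy 1 d a χ := by
  obtain ⟨k, hk, heven, hχ⟩ := hχ
  obtain ⟨i, hi, href⟩ := h.attacked k heven (by omega)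
  obtain ⟨hpar, ha⟩ := h.dialogue.1.attacks_of_ref hi href hχ
  exact ⟨_, ha, i, hi, by omega, rfl, k, h.dialogue.1.ref_lt hi href, href, hχ⟩

end Focused

/-- `Available d s`: at the end of `d`, leaving aside rule D10, Proponent may assert `s` by
attacking a negation or by defending an earlier assertion. -/
inductive Available (d : List Move) (s : Formula) : Prop
  | attack (hneg : Asserted 1 d (.neg s))
  | defense {a : Statement} {χ : Formula} (ha : AttackedBy 1 d a χ) (hs : Defends (.form s) a χ)

theorem Available.exists_move {φ s : Formula} {d : List Move} (hs : Available d s)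
    (h : SDialogueFor NRules φ d) (hlen : d.length % 2 = 0)
    (hatom : ∀ a, s = .atom a → Asserted 1 d s) :
    ∃ p : Move, p.stmt = .form s ∧ SDialogueFor NRules φ (d ++ [p]) ∧
      ∀ k χ, p.ref = some (k, true) → d[k]!.stmt = .form χ → ∃ γ, χ = .neg γ := by
  have hD10 (a : ℕ) (ha : Statement.form s = .form (.atom a)) : Asserted 1 d (.atom a) :=
    Statement.form.inj ha ▸ hatom a (Statement.form.inj ha)
  cases hs with
  | attack hneg =>
    obtain ⟨k, hk, hodd, hneg⟩ := hneg
    refine ⟨⟨.form s, some (k, true)⟩, rfl, h.concat (.attack hk (by omega) hneg (.neg s))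
      (fun _ => hD10) ?_, ?_⟩
    · rintro _ heven ⟨⟩
      omega
    · rintro _ χ ⟨⟩ hχ
      exact ⟨s, Statement.form.inj (hχ.symm.trans hneg)⟩
  | defense ha hs =>
    obtain ⟨k, hk, hodd, rfl, j, hj, href, hχ⟩ := ha
    exact ⟨⟨.form s, some (k, false)⟩, rfl, h.concat (.defend hk (by omega) hj href hχ hs)
      (fun _ => hD10) nofun, nofun⟩

/-- After `d`, Proponent has an available assertion that rule D10 permits and that Proponent
has not made before. -/
def HasFreshAssertion (d : List Move) : Prop :=
  ∃ s, Available d s ∧ (∀ a, s = .atom a → Asserted 1 d s) ∧ ¬ Asserted 0 d s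

theorem Focused.exists_concat {φ : Formula} {d : List Move} (h : Focused φ d)
    (hlen : d.length % 2 = 0) (hfresh : HasFreshAssertion d) : ∃ p, Focused φ (d ++ [p]) := by
  obtain ⟨s, havailable, hatom, hs⟩ := hfresh
  obtain ⟨p, hp, hdia, hneg⟩ := havailable.exists_move h.dialogue hlen hatom
  exact ⟨p, h.concat hdia (fun _ => ⟨s, hp, hs⟩) (by omega) fun _ => hneg⟩

theorem Focused.isHintikka {φ : Formula} {d : List Move} (h : Focused φ d)
    (hlen : d.length % 2 = 0) (hfresh : ¬ HasFreshAssertion d) :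
    IsHintikka (fun s => Asserted 0 d s ∨ ∃ a, s = .atom a ∧ ¬ Asserted 1 d s)
      (Asserted 1 d) := by
  have havailable {s : Formula} (hs : Available d s) :
      Asserted 0 d s ∨ ∃ a, s = .atom a ∧ ¬ Asserted 1 d s := by
    by_contra! hcon
    exact hfresh ⟨s, hs, hcon.2, hcon.1⟩
  refine ⟨?_, ?_, fun γ hγ => havailable (.attack hγ)⟩
  · rintro a (ha | ⟨b, -, hb⟩)
    · obtain ⟨_, hattack, -⟩ := h.exists_attackedBy hlen ha
      exact absurd trivial hattack.not_isAtomic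
    · exact hb
  · rintro χ (hχ | ⟨a, rfl, -⟩) hnonatomic
    · obtain ⟨a, ha, hattacked⟩ := h.exists_attackedBy hlen hχ
      refine ⟨a, ha, ?_, fun σ hσ => havailable (.defense hattacked hσ)⟩
      rintro α rfl
      obtain ⟨i, hi, hodd, hα, -⟩ := hattacked
      exact ⟨i, hi, hodd, hα⟩
    · exact absurd trivial hnonatomic

theorem nValid_of_forall_not_contestable {φ : Formula} (hφ : ∀ v, ¬ φ.Contestable v) :
    NValid φ := by
  have hnonatomic : ¬ φ.isAtomic := by
    intro hatomic
    cases φ with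
    | atom a => exact hφ (fun _ => False) id
    | neg | conj | disj | impl => exact hatomic
  refine sValid_of_invariant (Good := fun d => Focused φ d) (.singleton hnonatomic)
    (fun d hd => hd.dialogue) (fun d m hd hlen hm => ?_)
    fun f => ⟨2 * φ.subformulas.card + 1, by omega, fun h => ?_⟩
  · have hfocused := hd.concat_opponent hlen hm
    have heven : (d ++ [m]).length % 2 = 0 := by
      simp only [List.length_append, List.length_singleton]
      omega
    refine hfocused.exists_concat heven ?_
    by_contra hfresh
    exact hφ _ (((hfocused.isHintikka heven hfresh).contestable_and_concedable φ).1
      (.inl ⟨0, hm.length_pos, rfl, hm.2.2.2⟩))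
  · have := h.half_length_le_card
    rw [List.length_ofFn] at this
    omega

theorem nValid_iff {φ : Formula} : NValid φ ↔ ∀ v, ¬ φ.Contestable v :=
  ⟨NValid.not_contestable, nValid_of_forall_not_contestable⟩

/-- **Composition.** The set of N-valid formulas is closed under
modus ponens: if `φ` and `φ → ψ` are N-valid, then so is `ψ`. -/
theorem composition (φ ψ : Formula) (h1 : NValid φ)
    (h2 : NValid (Formula.impl φ ψ)) : NValid ψ := by
  rw [nValid_iff] at *
  intro v hψ
  have hφ : φ.Concedable v := (φ.concedable_or_contestable v).resolve_right (h1 v)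
  exact h2 v ⟨hφ, hψ⟩
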